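/- Let 0 < m < M, let f : [m,M] → (0,∞) be continuous and log-convex, let t₀ ∈ (m,M) be a point where f is differentiable with f′(t₀) ≠ 0, let A be a bounded self-adjoint operator on a complex Hilbert space H with mI ≤ A ≤ MI, and let φ : B(H) → B(K) be a normalized positive linear map. Define k(t) = exp[(f′(t₀)/f(t₀))·(t − t₀)] on [m,M], and for t₁ ∈ (m,M) set α = α(k,t₁) and β = β(k,t₁). Then f(φ(A)) ≥ (f(t₀)/α) · φ(exp[(f′(t₀)/f(t₀))·(A − t₀·I)]) − (β/α)·f(t₀)·I. -/

import Mathlib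

/-!
Write `c = f′(t₀) / f(t₀)` and `k t = exp (c (t - t₀))`.  Log-convexity of `f` says that `log f` lies
above its tangent at `t₀`, that is `f(t₀) k ≤ f` on `[m, M]` (`mul_exp_le_of_logconvex`).  Since `k`
is convex, it lies below its chord `a t + b` (`exp_affine_le_chord`) and above its tangent at `t₁`;
as `α > 0`, the latter reads `a t + b ≤ α k t + β` (`chord_le_alpha_mul_add_beta`).  Together these
place an affine function under `f`, namely
`(f(t₀) / α) (a t + b) - (β / α) f(t₀) ≤ f t` on `[m, M]`.

Affine functions commute with the normalized positive map `φ`: the chord bound gives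
`φ (k A) ≤ a φ(A) + b I`, and the affine minorant of `f`, applied to `φ(A)` (whose spectrum also lies
in `[m, M]`), gives the claim.
-/

/-- `a_g` for `g` on `[c,d]`. -/
noncomputable def chordSlope (c d : ℝ) (g : ℝ → ℝ) : ℝ := (g d - g c) / (d - c)

/-- `b_g` for `g` on `[c,d]`. -/
noncomputable def chordIntercept (c d : ℝ) (g : ℝ → ℝ) : ℝ := (d * g c - c * g d) / (d - c)

/-- `α(g,s) = a_g / g′(s)`. -/
noncomputable def mpAlpha (c d : ℝ) (g : ℝ → ℝ) (s : ℝ) : ℝ :=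
  chordSlope c d g / deriv g s

/-- `β(g,s) = a_g·s + b_g − a_g·g(s)/g′(s)`. -/
noncomputable def mpBeta (c d : ℝ) (g : ℝ → ℝ) (s : ℝ) : ℝ :=
  chordSlope c d g * s + chordIntercept c d g - chordSlope c d g * g s / deriv g s

/-- A log-convex function dominates the exponential whose logarithm is the tangent of `log f`. -/
lemma mul_exp_le_of_logconvex {m M : ℝ} {f : ℝ → ℝ} (hf_pos : ∀ t ∈ Set.Icc m M, 0 < f t)
    (hf_logconv : ConvexOn ℝ (Set.Icc m M) (fun t => Real.log (f t)))
    {t₀ : ℝ} (ht₀ : t₀ ∈ Set.Icc m M) (hdiff : DifferentiableAt ℝ f t₀)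
    {t : ℝ} (ht : t ∈ Set.Icc m M) :
    f t₀ * Real.exp (deriv f t₀ / f t₀ * (t - t₀)) ≤ f t := by
  have h0 := hf_pos t₀ ht₀
  have hd : HasDerivAt (fun t => Real.log (f t)) (deriv f t₀ / f t₀) t₀ :=
    hdiff.hasDerivAt.log h0.ne'
  have key : Real.log (f t₀) + deriv f t₀ / f t₀ * (t - t₀) ≤ Real.log (f t) := by
    rcases lt_trichotomy t t₀ with h | rfl | h
    · have := hf_logconv.slope_le_of_hasDerivAt ht ht₀ h hd
      rw [slope_def_field, div_le_iff₀ (by linarith)] at this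
      linarith
    · simp
    · have := hf_logconv.le_slope_of_hasDerivAt ht₀ ht h hd
      rw [slope_def_field, le_div_iff₀ (by linarith)] at this
      linarith
  calc f t₀ * Real.exp (deriv f t₀ / f t₀ * (t - t₀))
      = Real.exp (Real.log (f t₀) + deriv f t₀ / f t₀ * (t - t₀)) := by
        rw [Real.exp_add, Real.exp_log h0]
    _ ≤ Real.exp (Real.log (f t)) := Real.exp_le_exp.2 key
    _ = f t := Real.exp_log (hf_pos t ht)

lemma exp_affine_le_chord {m M c t₀ t : ℝ} (hmM : m < M) {k : ℝ → ℝ}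
    (hk : ∀ t, k t = Real.exp (c * (t - t₀))) (ht : t ∈ Set.Icc m M) :
    k t ≤ chordSlope m M k * t + chordIntercept m M k := by
  have hpos : 0 < M - m := sub_pos.2 hmM
  have hsum : (M - t) / (M - m) + (t - m) / (M - m) = 1 := by
    field_simp
    ring
  have h := convexOn_exp.2 (Set.mem_univ (c * (m - t₀))) (Set.mem_univ (c * (M - t₀)))
    (div_nonneg (sub_nonneg.2 ht.2) hpos.le) (div_nonneg (sub_nonneg.2 ht.1) hpos.le) hsum
  simp only [smul_eq_mul] at h
  rw [← hk, ← hk] at h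
  have e : (M - t) / (M - m) * (c * (m - t₀)) + (t - m) / (M - m) * (c * (M - t₀))
      = c * (t - t₀) := by
    field_simp
    ring
  rw [e, ← hk] at h
  refine h.trans_eq ?_
  unfold chordSlope chordIntercept
  field_simp
  ring

lemma deriv_exp_affine {c t₀ : ℝ} {k : ℝ → ℝ} (hk : ∀ t, k t = Real.exp (c * (t - t₀))) (t : ℝ) :
    deriv k t = c * k t := by
  have h : HasDerivAt k (Real.exp (c * (t - t₀)) * (c * 1)) t := by
    rw [funext hk]
    exact (((hasDerivAt_id t).sub_const t₀).const_mul c).exp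
  rw [h.deriv, hk]
  ring

/-- The slope of the chord of `k` has the sign of `c`, as do all derivatives of `k`. -/
lemma mpAlpha_exp_affine_pos {m M c t₀ : ℝ} (hmM : m < M) (hc : c ≠ 0) {k : ℝ → ℝ}
    (hk : ∀ t, k t = Real.exp (c * (t - t₀))) (t₁ : ℝ) : 0 < mpAlpha m M k t₁ := by
  have hpos : 0 < M - m := sub_pos.2 hmM
  have hk1 : 0 < k t₁ := by rw [hk]; exact Real.exp_pos _
  unfold mpAlpha chordSlope
  rw [deriv_exp_affine hk]
  rcases hc.lt_or_gt with hc | hc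
  · refine div_pos_of_neg_of_neg (div_neg_of_neg_of_pos ?_ hpos) (mul_neg_of_neg_of_pos hc hk1)
    rw [hk, hk, sub_neg, Real.exp_lt_exp]
    nlinarith
  · refine div_pos (div_pos ?_ hpos) (mul_pos hc hk1)
    rw [hk, hk, sub_pos, Real.exp_lt_exp]
    nlinarith

/-- The tangent of `k` at `t₁`, rescaled by `α > 0` so that its slope is that of the chord. -/
lemma chord_le_alpha_mul_add_beta {m M c t₀ : ℝ} (hmM : m < M) (hc : c ≠ 0) {k : ℝ → ℝ}
    (hk : ∀ t, k t = Real.exp (c * (t - t₀))) (t₁ t : ℝ) :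
    chordSlope m M k * t + chordIntercept m M k ≤ mpAlpha m M k t₁ * k t + mpBeta m M k t₁ := by
  have hα := mpAlpha_exp_affine_pos hmM hc hk t₁
  have hk1 : 0 < k t₁ := by rw [hk]; exact Real.exp_pos _
  have htan : k t₁ + c * k t₁ * (t - t₁) ≤ k t := by
    have h := Real.add_one_le_exp (c * (t - t₁))
    have e : k t = k t₁ * Real.exp (c * (t - t₁)) := by
      rw [hk, hk, ← Real.exp_add]
      ring_nf
    rw [e]
    nlinarith
  have ha : chordSlope m M k = mpAlpha m M k t₁ * (c * k t₁) := by
    unfold mpAlpha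
    rw [deriv_exp_affine hk]
    field_simp
  have hβ : mpBeta m M k t₁ =
      chordSlope m M k * t₁ + chordIntercept m M k - mpAlpha m M k t₁ * k t₁ := by
    unfold mpBeta mpAlpha
    ring
  rw [hβ]
  have := mul_le_mul_of_nonneg_left htan hα.le
  linear_combination this + (t - t₁) * ha

lemma cfc_affine {H : Type*} [NormedAddCommGroup H] [InnerProductSpace ℂ H] [CompleteSpace H]
    {A : H →L[ℂ] H} (hA : IsSelfAdjoint A) (p q : ℝ) :
    cfc (fun t : ℝ => p * t + q) A = p • A + q • (1 : H →L[ℂ] H) := by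
  rw [cfc_add_const q (fun t : ℝ => p * t) A, cfc_const_mul_id p A, Algebra.algebraMap_eq_smul_one]

lemma spectrum_subset_Icc_of_bounds {H : Type*} [NormedAddCommGroup H] [InnerProductSpace ℂ H]
    [CompleteSpace H] {A : H →L[ℂ] H} (hA : IsSelfAdjoint A) {m M : ℝ}
    (hA₁ : m • (1 : H →L[ℂ] H) ≤ A) (hA₂ : A ≤ M • (1 : H →L[ℂ] H)) :
    spectrum ℝ A ⊆ Set.Icc m M := by
  rw [← Algebra.algebraMap_eq_smul_one] at hA₁ hA₂
  exact fun t ht => ⟨(algebraMap_le_iff_le_spectrum hA).1 hA₁ t ht,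
    (le_algebraMap_iff_spectrum_le hA).1 hA₂ t ht⟩

theorem exponential_lower_bound_function_side
    {H K : Type*} [NormedAddCommGroup H] [InnerProductSpace ℂ H] [CompleteSpace H]
    [NormedAddCommGroup K] [InnerProductSpace ℂ K] [CompleteSpace K]
    (m M : ℝ) (hm : 0 < m) (hmM : m < M)
    (f : ℝ → ℝ) (hf_cont : ContinuousOn f (Set.Icc m M))
    (hf_pos : ∀ t ∈ Set.Icc m M, 0 < f t)
    (hf_logconv : ConvexOn ℝ (Set.Icc m M) (fun t => Real.log (f t)))
    (t₀ : ℝ) (ht₀ : t₀ ∈ Set.Ioo m M) (hdiff : DifferentiableAt ℝ f t₀)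
    (hderiv : deriv f t₀ ≠ 0)
    (A : H →L[ℂ] H) (hA : IsSelfAdjoint A)
    (hA₁ : m • (1 : H →L[ℂ] H) ≤ A) (hA₂ : A ≤ M • (1 : H →L[ℂ] H))
    (φ : (H →L[ℂ] H) →ₗ[ℂ] (K →L[ℂ] K))
    (hφ_pos : ∀ X : H →L[ℂ] H, 0 ≤ X → 0 ≤ φ X)
    (hφ_one : φ 1 = 1)
    (k : ℝ → ℝ)
    (hk : ∀ t, k t = Real.exp (deriv f t₀ / f t₀ * (t - t₀)))
    (t₁ : ℝ) (ht₁ : t₁ ∈ Set.Ioo m M) :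
    (f t₀ / mpAlpha m M k t₁) •
          φ (cfc (fun t : ℝ => Real.exp (deriv f t₀ / f t₀ * (t - t₀))) A) -
        (mpBeta m M k t₁ / mpAlpha m M k t₁ * f t₀) • 1 ≤
      cfc f (φ A) := by
  have hc : deriv f t₀ / f t₀ ≠ 0 :=
    div_ne_zero hderiv (hf_pos t₀ (Set.Ioo_subset_Icc_self ht₀)).ne'
  have hf0 : 0 < f t₀ := hf_pos t₀ (Set.Ioo_subset_Icc_self ht₀)
  have hα := mpAlpha_exp_affine_pos hmM hc hk t₁
  have hmono : ∀ X Y : H →L[ℂ] H, X ≤ Y → φ X ≤ φ Y := fun X Y h => by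
    rw [← sub_nonneg, ← map_sub]
    exact hφ_pos _ (sub_nonneg.2 h)
  have hsmul : ∀ (r : ℝ) (X : H →L[ℂ] H), φ (r • X) = r • φ X := fun r X =>
    LinearMap.map_smul_of_tower φ r X
  have hB₁ : m • (1 : K →L[ℂ] K) ≤ φ A := by
    simpa only [hsmul, hφ_one] using hmono _ _ hA₁
  have hB₂ : φ A ≤ M • (1 : K →L[ℂ] K) := by
    simpa only [hsmul, hφ_one] using hmono _ _ hA₂
  -- `φ A` is self-adjoint because it is at least `m • 1` with `m > 0`, hence nonnegative.
  have hB : IsSelfAdjoint (φ A) :=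
    IsSelfAdjoint.of_nonneg ((smul_nonneg hm.le zero_le_one).trans hB₁)
  have hspA := spectrum_subset_Icc_of_bounds hA hA₁ hA₂
  have hspB := spectrum_subset_Icc_of_bounds hB hB₁ hB₂
  have hfB : ContinuousOn f (spectrum ℝ (φ A)) := hf_cont.mono hspB
  set a := chordSlope m M k with ha_def
  set b := chordIntercept m M k with hb_def
  set α := mpAlpha m M k t₁ with hα_def
  set β := mpBeta m M k t₁ with hβ_def
  have hupper : φ (cfc (fun t : ℝ => Real.exp (deriv f t₀ / f t₀ * (t - t₀))) A) ≤
      a • φ A + b • (1 : K →L[ℂ] K) := by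
    have h : cfc (fun t : ℝ => Real.exp (deriv f t₀ / f t₀ * (t - t₀))) A ≤
        a • A + b • (1 : H →L[ℂ] H) := by
      rw [← cfc_affine hA]
      refine cfc_mono fun t ht => ?_
      rw [← hk]
      exact exp_affine_le_chord hmM hk (hspA ht)
    simpa only [map_add, hsmul, hφ_one] using hmono _ _ h
  have hlower : (f t₀ / α * a) • φ A + (f t₀ / α * b - β / α * f t₀) • (1 : K →L[ℂ] K) ≤
      cfc f (φ A) := by
    rw [← cfc_affine hB]
    refine cfc_mono fun t ht => ?_
    have h₁ := mul_exp_le_of_logconvex hf_pos hf_logconv (Set.Ioo_subset_Icc_self ht₀) hdiff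
      (hspB ht)
    rw [← hk] at h₁
    refine le_trans ?_ h₁
    have h₂ := mul_le_mul_of_nonneg_left (chord_le_alpha_mul_add_beta hmM hc hk t₁ t)
      (div_nonneg hf0.le hα.le)
    have e : f t₀ / α * (α * k t + β) = f t₀ * k t + β / α * f t₀ := by
      field_simp
    linear_combination h₂ + e
  refine le_trans ?_ hlower
  have h := sub_le_sub_right (smul_le_smul_of_nonneg_left hupper (div_nonneg hf0.le hα.le))
    ((β / α * f t₀) • (1 : K →L[ℂ] K))
  refine h.trans_eq ?_
  module
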